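/- Let λ > 0, ε > 0 and V ≠ 0, and define φ : ℝ → ℝ by φ(ξ) = V − 1 − (3ε²/(25λV)) · (tanh²(εξ/(10λV)) + 2 tanh(εξ/(10λV)) − 1). Then φ'(ξ) < 0 for every ξ ∈ ℝ; in particular φ is strictly decreasing on ℝ (a monotonic shock profile). -/

import Mathlib

/-- The dimensionless shape of the explicit gBBM shock, whose profile is
`a - c * tanhShock (k * ξ)` for an amplitude `c` and a wave number `k`. -/
noncomputable def tanhShock (x : ℝ) : ℝ :=
  Real.tanh x ^ 2 + 2 * Real.tanh x - 1

theorem hasDerivAt_tanh (x : ℝ) : HasDerivAt Real.tanh (1 - Real.tanh x ^ 2) x := by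
  have tanh_eq : Real.tanh = Real.sinh / Real.cosh :=
    funext Real.tanh_eq_sinh_div_cosh
  have cosh_ne : Real.cosh x ≠ 0 := (Real.cosh_pos x).ne'
  have quotient_eq : (Real.cosh x * Real.cosh x - Real.sinh x * Real.sinh x) / Real.cosh x ^ 2 =
      1 - Real.tanh x ^ 2 := by
    rw [Real.tanh_eq_sinh_div_cosh]
    field_simp
  rw [← quotient_eq, tanh_eq]
  exact (Real.hasDerivAt_sinh x).div (Real.hasDerivAt_cosh x) cosh_ne

theorem hasDerivAt_tanhShock (x : ℝ) :
    HasDerivAt tanhShock (2 * (1 + Real.tanh x) * (1 - Real.tanh x ^ 2)) x := by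
  refine ((((hasDerivAt_tanh x).fun_pow 2).fun_add
    ((hasDerivAt_tanh x).const_mul 2)).sub_const 1).congr_deriv ?_
  ring

theorem deriv_tanhShock_pos (x : ℝ) : 0 < deriv tanhShock x := by
  have one_add_tanh_pos : 0 < 1 + Real.tanh x := by linarith [Real.neg_one_lt_tanh x]
  have one_sub_tanh_sq_pos : 0 < 1 - Real.tanh x ^ 2 := sub_pos.mpr (Real.tanh_sq_lt_one x)
  rw [(hasDerivAt_tanhShock x).deriv]
  positivity

theorem deriv_const_sub_const_mul_comp_const_mul (f : ℝ → ℝ) (a c k ξ : ℝ) :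
    deriv (fun ξ ↦ a - c * f (k * ξ)) ξ = -(c * k * deriv f (k * ξ)) := by
  rw [deriv_const_sub, deriv_const_mul_field, deriv_comp_mul_left, smul_eq_mul, mul_assoc]

theorem deriv_const_sub_const_mul_tanhShock_neg {c k : ℝ} (hck : 0 < c * k) (a ξ : ℝ) :
    deriv (fun ξ ↦ a - c * tanhShock (k * ξ)) ξ < 0 := by
  rw [deriv_const_sub_const_mul_comp_const_mul]
  exact neg_lt_zero.mpr (mul_pos hck (deriv_tanhShock_pos _))

-- The amplitude and the wave number both carry the factor `1 / (lam * V)`, so its sign cancels.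
theorem gBBM_amplitude_mul_waveNumber_pos {lam eps V : ℝ} (hlam : lam ≠ 0) (heps : 0 < eps)
    (hV : V ≠ 0) : 0 < 3 * eps ^ 2 / (25 * lam * V) * (eps / (10 * lam * V)) := by
  calc
    0 < 3 * eps ^ 3 / (250 * (lam ^ 2 * V ^ 2)) := by positivity
    _ = 3 * eps ^ 2 / (25 * lam * V) * (eps / (10 * lam * V)) := by ring

theorem gBBM_explicit_monotone_general (lam eps V : ℝ) (hlam : lam ≠ 0) (heps : 0 < eps)
    (hV : V ≠ 0) (φ : ℝ → ℝ)
    (hφ : ∀ ξ : ℝ, φ ξ = V - 1 - (3 * eps ^ 2 / (25 * lam * V)) *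
      (Real.tanh (eps * ξ / (10 * lam * V)) ^ 2
        + 2 * Real.tanh (eps * ξ / (10 * lam * V)) - 1)) :
    (∀ ξ : ℝ, deriv φ ξ < 0) ∧ StrictAnti φ := by
  have φ_eq : φ = fun ξ ↦
      V - 1 - 3 * eps ^ 2 / (25 * lam * V) * tanhShock (eps / (10 * lam * V) * ξ) := by
    funext ξ
    rw [hφ, tanhShock, mul_div_right_comm eps ξ]
  have deriv_neg (ξ : ℝ) : deriv φ ξ < 0 := by
    rw [φ_eq]
    exact deriv_const_sub_const_mul_tanhShock_neg
      (gBBM_amplitude_mul_waveNumber_pos hlam heps hV) (V - 1) ξ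
  exact ⟨deriv_neg, strictAnti_of_deriv_neg deriv_neg⟩

/-- the explicit tanh profile is strictly decreasing:
`φ'(ξ) < 0` for every `ξ`, hence `φ` is strictly antitone (a monotonic shock). -/
theorem gBBM_explicit_monotone (lam eps V : ℝ) (hlam : 0 < lam) (heps : 0 < eps)
    (hV : V ≠ 0) (φ : ℝ → ℝ)
    (hφ : ∀ ξ : ℝ, φ ξ = V - 1 - (3 * eps ^ 2 / (25 * lam * V)) *
      (Real.tanh (eps * ξ / (10 * lam * V)) ^ 2
        + 2 * Real.tanh (eps * ξ / (10 * lam * V)) - 1)) :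
    (∀ ξ : ℝ, deriv φ ξ < 0) ∧ StrictAnti φ :=
  gBBM_explicit_monotone_general lam eps V hlam.ne' heps hV φ hφ
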